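/- Let F be a polynomial in variables x_1,...,x_n and consider the annihilator ideals F(x)^⊥ ⊆ k[α_1,...,α_n] and F(y)^⊥ ⊆ k[β_1,...,β_n] under the apolarity action (α_i = ∂/∂x_i, β_i = ∂/∂y_i). Then the annihilator of the product F(x)·F(y) ∈ k[t, x, y] inside k[t, α, β] equals the ideal generated by F(x)^⊥ and F(y)^⊥. -/

import Mathlib

/-!
Write `A = k[z₁,…,zₙ]`, `B = k[t,x,y]`, let `φ : A → A` be `f ↦ f ∘ F`, so that `ker φ = F^⊥`, and
let `ψ : B → B` be the action on `F(x) F(y)`. Partial derivatives commute with each other and with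
multiplication by `t`, so the actions are module structures (`exists_actHom`), and the Leibniz rule
gives `ψ (tᵃ f(α) g(β)) = tᵃ (φ f)(x) (φ g)(y)` (`act_product`). In particular the annihilator
is an ideal containing the images of `F^⊥`.

For the other inclusion, choose a linear `s : A → A` with `φ s φ = φ`, so that
`f - s (φ f) ∈ F^⊥` for every `f`. Let `S : B → B` be the linear map
`tᵃ f(x) g(y) ↦ tᵃ (s f)(α) (s g)(β)` (`tensorSelf s`). Modulo the ideal `J` generated by the two
copies of `F^⊥`, the map `S ψ` fixes each `tᵃ f(α) g(β)`, and these span `B`; hence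
`h ≡ S (ψ h)` modulo `J` for all `h`, and `ψ h = 0` forces `h ∈ J`.
-/


open MvPolynomial

/-- Composition of powers of the operators `op i`, with multiplicities given by `m`. -/
noncomputable def opPow {k : Type*} [CommSemiring k] {σ : Type*}
    (op : σ → Module.End k (MvPolynomial σ k)) (m : σ →₀ ℕ) :
    Module.End k (MvPolynomial σ k) :=
  m.support.toList.foldr (fun i L => (op i) ^ (m i) * L) 1

/-- The action of a "differential polynomial" `h` on `F`, each variable of `h` acting by the
operator `op i`. -/
noncomputable def apAct {k : Type*} [CommSemiring k] {σ : Type*}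
    (op : σ → Module.End k (MvPolynomial σ k)) (h F : MvPolynomial σ k) : MvPolynomial σ k :=
  h.support.sum fun m => (h.coeff m) • (opPow op m F)

/-- Apolarity contraction `h ∘ F`: each variable of `h` acts as the corresponding partial
derivative. -/
noncomputable def apContract {k : Type*} [CommSemiring k] {σ : Type*} [DecidableEq σ]
    (h F : MvPolynomial σ k) : MvPolynomial σ k :=
  apAct (fun i => (pderiv i).toLinearMap) h F

/-- The operators for the relative apolarity action on `k[t, z…]` (with `t = X none`):
`t` acts by multiplication and every other variable acts as its partial derivative. -/
noncomputable def tOp {k : Type*} [CommSemiring k] {τ : Type*} [DecidableEq τ] :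
    Option τ → Module.End k (MvPolynomial (Option τ) k)
  | none => LinearMap.mulLeft k (X none)
  | some v => (pderiv (some v)).toLinearMap

/-- Relative apolarity action of `k[t, α…]` on `k[t, x…]`: `t` acts by multiplication, and the
variable `some v` acts as `∂/∂(X (some v))`. -/
noncomputable def tAct {k : Type*} [CommSemiring k] {τ : Type*} [DecidableEq τ]
    (h F : MvPolynomial (Option τ) k) : MvPolynomial (Option τ) k :=
  apAct tOp h F


/-! ### The actions as module structures -/

/-- For pairwise commuting operators, `apAct` is the module structure coming from an algebra
homomorphism from polynomials to endomorphisms. -/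
lemma exists_actHom {k σ : Type*} [CommSemiring k]
    (op : σ → Module.End k (MvPolynomial σ k)) (hop : ∀ i j, op i * op j = op j * op i) :
    ∃ Φ : MvPolynomial σ k →ₐ[k] Module.End k (MvPolynomial σ k),
      (∀ i, Φ (X i) = op i) ∧ ∀ h F, apAct op h F = Φ h F := by
  have hcomm : ∀ a ∈ Set.range op, ∀ b ∈ Set.range op, a * b = b * a := by
    rintro _ ⟨i, rfl⟩ _ ⟨j, rfl⟩
    exact hop i j
  -- `aeval` needs a commutative target, so it takes values in the subalgebra generated by `op`.
  have hc := Algebra.isMulCommutative_adjoin k hcomm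
  let _ : CommSemiring (Algebra.adjoin k (Set.range op)) :=
    { (inferInstance : Semiring (Algebra.adjoin k (Set.range op))) with
      mul_comm := hc.is_comm.comm }
  let Φ : MvPolynomial σ k →ₐ[k] Module.End k (MvPolynomial σ k) :=
    (Algebra.adjoin k (Set.range op)).val.comp
      (aeval fun i => (⟨op i, Algebra.subset_adjoin ⟨i, rfl⟩⟩ : Algebra.adjoin k (Set.range op)))
  have hX : ∀ i, Φ (X i) = op i := fun i => by simp [Φ]
  refine ⟨Φ, hX, fun h F => ?_⟩
  have hfold : ∀ (m : σ →₀ ℕ) (l : List σ),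
      Φ ((l.map fun i => X i ^ m i).prod) = l.foldr (fun i L => op i ^ m i * L) 1 := by
    intro m l
    induction l with
    | nil => simp
    | cons i l ih => simp [ih, hX]
  have hmon : ∀ m : σ →₀ ℕ, Φ (monomial m 1) = opPow op m := by
    intro m
    rw [opPow, ← hfold, monomial_eq, C_1, one_mul, Finsupp.prod, ← Finset.prod_map_toList]
  conv_rhs => rw [h.as_sum]
  rw [map_sum, LinearMap.sum_apply, apAct]
  refine Finset.sum_congr rfl fun m _ => ?_
  rw [← hmon, ← mul_one (coeff m h), ← smul_eq_mul, ← smul_monomial, map_smul,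
    LinearMap.smul_apply, smul_eq_mul, mul_one]

lemma pderiv_comm_end {k σ : Type*} [CommSemiring k] (i j : σ) :
    ((pderiv i).toLinearMap * (pderiv j).toLinearMap : Module.End k (MvPolynomial σ k)) =
      (pderiv j).toLinearMap * (pderiv i).toLinearMap := by
  classical
  apply LinearMap.ext
  intro p
  ext m
  by_cases hij : i = j
  · subst hij; rfl
  · simp only [Module.End.mul_apply, Derivation.coeFn_coe, coeff_pderiv, Finsupp.add_apply, Finsupp.single_eq_of_ne hij,
      Finsupp.single_eq_of_ne (Ne.symm hij)]
    rw [add_right_comm m, add_zero, add_zero, mul_right_comm]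

lemma tOp_comm {k τ : Type*} [CommSemiring k] [DecidableEq τ] (i j : Option τ) :
    tOp (k := k) i * tOp j = tOp j * tOp i := by
  have h : ∀ v : τ, tOp (k := k) (some v) * tOp none = tOp none * tOp (some v) := fun v => by
    apply LinearMap.ext
    intro p
    simp [tOp]
  rcases i with _ | i <;> rcases j with _ | j
  · rfl
  · exact (h j).symm
  · exact h i
  · exact pderiv_comm_end _ _

/-! ### Action on products of polynomials in disjoint variables -/

/-- The index of `x_i` (or `α_i`) among the variables of `k[t, x, y]`. -/
def inX {n : ℕ} (i : Fin n) : Option (Fin n ⊕ Fin n) := some (Sum.inl i)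

/-- The index of `y_i` (or `β_i`) among the variables of `k[t, x, y]`. -/
def inY {n : ℕ} (i : Fin n) : Option (Fin n ⊕ Fin n) := some (Sum.inr i)

lemma inX_injective {n : ℕ} : Function.Injective (inX (n := n)) := fun i j h => by
  simpa [inX] using h

lemma inY_injective {n : ℕ} : Function.Injective (inY (n := n)) := fun i j h => by
  simpa [inY] using h

lemma pderiv_inX_rename_inY {k : Type*} [CommSemiring k] {n : ℕ} (i : Fin n)
    (g : MvPolynomial (Fin n) k) : pderiv (inX i) (rename inY g) = 0 := by
  classical
  refine pderiv_eq_zero_of_notMem_vars fun h => ?_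
  have := vars_rename inY g h
  simp [inX, inY] at this

lemma pderiv_inY_rename_inX {k : Type*} [CommSemiring k] {n : ℕ} (i : Fin n)
    (g : MvPolynomial (Fin n) k) : pderiv (inY i) (rename inX g) = 0 := by
  classical
  refine pderiv_eq_zero_of_notMem_vars fun h => ?_
  have := vars_rename inX g h
  simp [inX, inY] at this

/-- The actions of `k[t, α, β]` and of `k[α]`, `k[β]` are compatible:
`tᵃ f(α) g(β)` sends `u(x) v(y)` to `tᵃ (f ∘ u)(x) (g ∘ v)(y)`. -/
lemma act_product {k : Type*} [CommSemiring k] {n : ℕ}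
    (Φ : MvPolynomial (Option (Fin n ⊕ Fin n)) k →ₐ[k]
      Module.End k (MvPolynomial (Option (Fin n ⊕ Fin n)) k))
    (hΦ : ∀ i, Φ (X i) = tOp i)
    (Ψ : MvPolynomial (Fin n) k →ₐ[k] Module.End k (MvPolynomial (Fin n) k))
    (hΨ : ∀ i, Ψ (X i) = (pderiv i).toLinearMap)
    (a : ℕ) (f g u v : MvPolynomial (Fin n) k) :
    Φ (X none ^ a * rename inX f * rename inY g) (rename inX u * rename inY v) =
      X none ^ a * rename inX (Ψ f u) * rename inY (Ψ g v) := by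
  have hx : ∀ f u v : MvPolynomial (Fin n) k,
      Φ (rename inX f) (rename inX u * rename inY v) = rename inX (Ψ f u) * rename inY v := by
    intro f
    induction f using MvPolynomial.induction_on with
    | C c => intro u v; simp [← algebraMap_eq]
    | add p q hp hq => intro u v; simp [hp, hq, add_mul]
    | mul_X p i hp =>
      intro u v
      have : Φ (X (inX i)) (rename inX u * rename inY v) =
          rename inX (pderiv i u) * rename inY v := by
        rw [hΦ]
        change pderiv (inX i) _ = _
        rw [pderiv_mul, pderiv_rename inX_injective, pderiv_inX_rename_inY, mul_zero, add_zero]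
      simp [hΨ, this, hp]
  have hy : ∀ g u v : MvPolynomial (Fin n) k,
      Φ (rename inY g) (rename inX u * rename inY v) = rename inX u * rename inY (Ψ g v) := by
    intro g
    induction g using MvPolynomial.induction_on with
    | C c => intro u v; simp [← algebraMap_eq]
    | add p q hp hq => intro u v; simp [hp, hq, mul_add]
    | mul_X p i hp =>
      intro u v
      have : Φ (X (inY i)) (rename inX u * rename inY v) =
          rename inX u * rename inY (pderiv i v) := by
        rw [hΦ]
        change pderiv (inY i) _ = _
        rw [pderiv_mul, pderiv_rename inY_injective, pderiv_inY_rename_inX, zero_mul, zero_add]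
      simp [hΨ, this, hp]
  have ht : ∀ (a : ℕ) (w : MvPolynomial (Option (Fin n ⊕ Fin n)) k),
      Φ (X none ^ a) w = X none ^ a * w := by
    intro a w
    rw [map_pow, hΦ, tOp, LinearMap.pow_mulLeft, LinearMap.mulLeft_apply]
  rw [map_mul Φ, map_mul Φ, Module.End.mul_apply, Module.End.mul_apply, hy, hx, ht, mul_assoc]

lemma monomial_eq_product {k : Type*} [CommSemiring k] {n : ℕ}
    (m : Option (Fin n ⊕ Fin n) →₀ ℕ) (c : k) :
    ∃ (a : ℕ) (f g : MvPolynomial (Fin n) k),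
      monomial m c = X none ^ a * rename inX f * rename inY g := by
  refine induction_on_monomial (motive := fun p => ∃ (a : ℕ) (f g : MvPolynomial (Fin n) k),
    p = X none ^ a * rename inX f * rename inY g) (fun c => ⟨0, C c, 1, by simp⟩) ?_ m c
  rintro p i ⟨a, f, g, rfl⟩
  rcases i with _ | i | i
  · exact ⟨a + 1, f, g, by ring⟩
  · exact ⟨a, f * X i, g, by rw [map_mul, rename_X, inX]; ring⟩
  · exact ⟨a, f, g * X i, by rw [map_mul, rename_X, inY]; ring⟩

/-! ### The map `id ⊗ L ⊗ L` -/

/-- The map `id ⊗ L ⊗ L` on `k[t, x, y] = k[t] ⊗ k[x] ⊗ k[y]`, for a linear endomorphism `L` of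
`k[z₁,…,zₙ]`, defined by its values on monomials. -/
noncomputable def tensorSelf {k : Type*} [CommSemiring k] {n : ℕ}
    (L : MvPolynomial (Fin n) k →ₗ[k] MvPolynomial (Fin n) k) :
    MvPolynomial (Option (Fin n ⊕ Fin n)) k →ₗ[k] MvPolynomial (Option (Fin n ⊕ Fin n)) k :=
  (basisMonomials _ k).constr k fun m =>
    X none ^ m none * rename inX (L (monomial (m.comapDomain inX inX_injective.injOn) 1)) *
      rename inY (L (monomial (m.comapDomain inY inY_injective.injOn) 1))

lemma tensorSelf_product {k : Type*} [CommSemiring k] {n : ℕ}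
    (L : MvPolynomial (Fin n) k →ₗ[k] MvPolynomial (Fin n) k) (a : ℕ)
    (f g : MvPolynomial (Fin n) k) :
    tensorSelf L (X none ^ a * rename inX f * rename inY g) =
      X none ^ a * rename inX (L f) * rename inY (L g) := by
  have hmon : ∀ u v : Fin n →₀ ℕ,
      tensorSelf L (X none ^ a * rename inX (monomial u 1) * rename inY (monomial v 1)) =
        X none ^ a * rename inX (L (monomial u 1)) * rename inY (L (monomial v 1)) := by
    intro u v
    have hne : ∀ (i : Fin n), (none : Option (Fin n ⊕ Fin n)) ≠ inX i := fun i => by simp [inX]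
    have hne' : ∀ (i : Fin n), (none : Option (Fin n ⊕ Fin n)) ≠ inY i := fun i => by simp [inY]
    have hxy : ∀ i j : Fin n, inX i ≠ inY j := fun i j => by simp [inX, inY]
    set M : Option (Fin n ⊕ Fin n) →₀ ℕ :=
      Finsupp.single none a + u.mapDomain inX + v.mapDomain inY with hM
    have e : (X none ^ a * rename inX (monomial u 1) * rename inY (monomial v 1) :
        MvPolynomial (Option (Fin n ⊕ Fin n)) k) = basisMonomials _ k M := by
      simp [X_pow_eq_monomial, rename_monomial, monomial_mul, hM]
    have h0 : M none = a := by
      rw [hM, Finsupp.add_apply, Finsupp.add_apply, Finsupp.single_eq_same,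
        Finsupp.mapDomain_of_notMem_range, Finsupp.mapDomain_of_notMem_range]
      · rfl
      · rintro ⟨i, hi⟩; exact hne' i hi.symm
      · rintro ⟨i, hi⟩; exact hne i hi.symm
    have h1 : M.comapDomain inX inX_injective.injOn = u := by
      ext i
      rw [Finsupp.comapDomain_apply, hM, Finsupp.add_apply, Finsupp.add_apply,
        Finsupp.single_eq_of_ne (hne i).symm, Finsupp.mapDomain_apply inX_injective,
        Finsupp.mapDomain_of_notMem_range]
      · simp
      · rintro ⟨j, hj⟩; exact hxy i j hj.symm
    have h2 : M.comapDomain inY inY_injective.injOn = v := by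
      ext i
      rw [Finsupp.comapDomain_apply, hM, Finsupp.add_apply, Finsupp.add_apply,
        Finsupp.single_eq_of_ne (hne' i).symm, Finsupp.mapDomain_apply inY_injective,
        Finsupp.mapDomain_of_notMem_range]
      · simp
      · rintro ⟨j, hj⟩; exact hxy j i hj
    rw [e, tensorSelf, Module.Basis.constr_basis, h0, h1, h2]
  have hsmul : ∀ (u : Fin n →₀ ℕ) (c : k), monomial u c = c • monomial u (1 : k) := by
    intro u c
    rw [smul_monomial, smul_eq_mul, mul_one]
  induction f using MvPolynomial.induction_on' with
  | add p q hp hq => simp only [map_add, mul_add, add_mul, hp, hq]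
  | monomial u c =>
    induction g using MvPolynomial.induction_on' with
    | add p q hp hq => simp only [map_add, mul_add, hp, hq]
    | monomial v d =>
      rw [hsmul u c, hsmul v d]
      simp only [map_smul, mul_smul_comm, smul_mul_assoc, hmon]

/-! ### The annihilator of the product -/

/-- **The annihilator of `F(x)·F(y)`.** For a polynomial `F ∈ k[x_1,…,x_n]`, the annihilator of
`F(x)·F(y)` in `k[t,α,β]` under the relative apolarity action (`α_i = ∂/∂x_i`, `β_i = ∂/∂y_i`,
`t` by multiplication) is the ideal generated by (the images of) `F(x)^⊥ ⊆ k[α]` and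
`F(y)^⊥ ⊆ k[β]`. Here `t = X none`, `α_i = x_i = X (some (Sum.inl i))`,
`β_i = y_i = X (some (Sum.inr i))`. -/
theorem perp_of_product {k : Type*} [Field k] [CharZero k] {n : ℕ}
    (F : MvPolynomial (Fin n) k) :
    letI B := MvPolynomial (Option (Fin n ⊕ Fin n)) k
    letI ια : MvPolynomial (Fin n) k →ₐ[k] B :=
      aeval fun i : Fin n => X (some (Sum.inl i))
    letI ιβ : MvPolynomial (Fin n) k →ₐ[k] B :=
      aeval fun i : Fin n => X (some (Sum.inr i))
    {h : B | tAct h (ια F * ιβ F) = 0}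
      = ↑(Ideal.span (ια '' {h : MvPolynomial (Fin n) k | apContract h F = 0}
          ∪ ιβ '' {h : MvPolynomial (Fin n) k | apContract h F = 0})) := by
  let B := MvPolynomial (Option (Fin n ⊕ Fin n)) k
  let ια : MvPolynomial (Fin n) k →ₐ[k] B := aeval fun i : Fin n => X (some (Sum.inl i))
  let ιβ : MvPolynomial (Fin n) k →ₐ[k] B := aeval fun i : Fin n => X (some (Sum.inr i))
  change {h : B | tAct h (ια F * ιβ F) = 0} =
    (Ideal.span (ια '' {h : MvPolynomial (Fin n) k | apContract h F = 0}
      ∪ ιβ '' {h : MvPolynomial (Fin n) k | apContract h F = 0}) : Set B)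
  obtain ⟨Φ, hΦ, hΦa⟩ := exists_actHom (tOp (k := k) (τ := Fin n ⊕ Fin n)) tOp_comm
  obtain ⟨Ψ, hΨ, hΨa⟩ := exists_actHom (k := k)
    (fun i : Fin n => (pderiv i).toLinearMap) pderiv_comm_end
  have hα : ∀ f, ια f = rename inX f := fun f =>
    DFunLike.congr_fun (algHom_ext fun i => (aeval_X _ i).trans (rename_X inX i).symm : ια = rename inX) f
  have hβ : ∀ f, ιβ f = rename inY f := fun f =>
    DFunLike.congr_fun (algHom_ext fun i => (aeval_X _ i).trans (rename_X inY i).symm : ιβ = rename inY) f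
  have hact := act_product Φ hΦ Ψ hΨ
  set J := Ideal.span (ια '' {h : MvPolynomial (Fin n) k | apContract h F = 0}
    ∪ ιβ '' {h : MvPolynomial (Fin n) k | apContract h F = 0}) with hJ
  have hJα : ∀ f, Ψ f F = 0 → rename inX f ∈ J := fun f hf =>
    Ideal.subset_span (Or.inl ⟨f, (hΨa f F).trans hf, hα f⟩)
  have hJβ : ∀ f, Ψ f F = 0 → rename inY f ∈ J := fun f hf =>
    Ideal.subset_span (Or.inr ⟨f, (hΨa f F).trans hf, hβ f⟩)
  ext h
  change apAct tOp h _ = 0 ↔ h ∈ J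
  rw [hΦa, hα, hβ]
  constructor
  · intro h0
    let φ : MvPolynomial (Fin n) k →ₗ[k] MvPolynomial (Fin n) k :=
      (LinearMap.applyₗ F).comp Ψ.toLinearMap
    -- `s` is a generalized inverse of `φ`: a section over the range, extended to all of `k[z]`.
    obtain ⟨s, hs⟩ : ∃ s : MvPolynomial (Fin n) k →ₗ[k] MvPolynomial (Fin n) k,
        ∀ f, φ (s (φ f)) = φ f := by
      obtain ⟨r, hr⟩ := φ.rangeRestrict.exists_rightInverse_of_surjective φ.range_rangeRestrict
      obtain ⟨s, hs⟩ := r.exists_extend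
      refine ⟨s, fun f => ?_⟩
      have h1 : s (φ f) = r (φ.rangeRestrict f) := LinearMap.congr_fun hs (φ.rangeRestrict f)
      rw [h1]
      exact congrArg Subtype.val (LinearMap.congr_fun hr (φ.rangeRestrict f))
    have hker : ∀ f, Ψ (f - s (φ f)) F = 0 := by
      intro f
      change φ (f - s (φ f)) = 0
      rw [map_sub, hs, sub_self]
    have key : ∀ h : B, h - tensorSelf s (Φ h (rename inX F * rename inY F)) ∈ J := by
      intro h
      induction h using MvPolynomial.induction_on' with
      | add p q hp hq =>
        have := J.add_mem hp hq
        rwa [← add_sub_add_comm, ← map_add (tensorSelf s), ← LinearMap.add_apply,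
          ← map_add Φ] at this
      | monomial m c =>
        obtain ⟨a, f, g, e⟩ := monomial_eq_product m c
        rw [e, hact, tensorSelf_product]
        -- With `u = s (φ f)` and `v = s (φ g)`: `f g - u v = (f - u) g + u (g - v)`.
        have h1 := J.mul_mem_left (X none ^ a * rename inY g) (hJα _ (hker f))
        have h2 := J.mul_mem_left (X none ^ a * rename inX (s (φ f))) (hJβ _ (hker g))
        have h3 := J.add_mem h1 h2
        rw [map_sub, map_sub] at h3
        convert h3 using 1
        change _ - X none ^ a * rename inX (s (φ f)) * rename inY (s (φ g)) = _
        ring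
    have := key h
    rwa [h0, map_zero, sub_zero] at this
  · intro hh
    refine Submodule.span_induction (p := fun h _ => Φ h (rename inX F * rename inY F) = 0)
      ?_ ?_ ?_ ?_ hh
    · rintro _ (⟨f, hf, rfl⟩ | ⟨f, hf, rfl⟩)
      · have h1 : Ψ f F = 0 := (hΨa f F).symm.trans hf
        have := hact 0 f 1 F F
        simpa [h1, hα, hβ] using this
      · have h1 : Ψ f F = 0 := (hΨa f F).symm.trans hf
        have := hact 0 1 f F F
        simpa [h1, hα, hβ] using this
    · simp
    · intro p q _ _ hp hq
      simp [hp, hq]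
    · intro b p _ hp
      simp [hp]
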